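/- The functionals L₁(v) := √(Γ₁(v,v)) + β(v)/Area(∂K) and L₃(v) := √(Γ₃(v,v)) + β(v)/Area(∂K) are positive on ℝⁿ \ {0}, where Γᵢ = γᵢ/Area(∂K); i.e., the Randers perturbation by the 1-form β/Area(∂K) yields positive functionals. -/

import Mathlib

open MeasureTheory

/-- The Riemann–Finsler metric `g_{ij} = ∂²E/∂yʲ∂yⁱ` of the energy
`E = L²/2` of a Minkowski functional `L`. -/
noncomputable def gmet (n : ℕ) (L : (Fin n → ℝ) → ℝ) (v : Fin n → ℝ) (i j : Fin n) : ℝ :=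
  fderiv ℝ (fun u => fderiv ℝ (fun w => L w ^ 2 / 2) u (Pi.single i 1)) v (Pi.single j 1)

/-- `L` is a Finsler–Minkowski functional: positively `1`-homogeneous, positive
away from the origin, `C⁴` away from the origin, with positive definite
Hessian `gmet` of the energy `E = L²/2`. -/
def IsFinslerMinkowski (n : ℕ) (L : (Fin n → ℝ) → ℝ) : Prop :=
  (∀ v : Fin n → ℝ, v ≠ 0 → ∀ t : ℝ, 0 < t → L (t • v) = t * L v) ∧
  (∀ v : Fin n → ℝ, v ≠ 0 → 0 < L v) ∧
  (∀ v : Fin n → ℝ, v ≠ 0 → ContDiffAt ℝ 4 L v) ∧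
  (∀ v : Fin n → ℝ, v ≠ 0 → ∀ w : Fin n → ℝ, w ≠ 0 →
    0 < ∑ i, ∑ j, w i * w j * gmet n L v i j)

/-- The volume density `√(det g_{ij})`. -/
noncomputable def volDens (n : ℕ) (L : (Fin n → ℝ) → ℝ) (v : Fin n → ℝ) : ℝ :=
  Real.sqrt (Matrix.det (Matrix.of fun i j => gmet n L v i j))

/-- `γ₁(v,v) = ∫_{∂K} g(v,v) μ = n ∫_K g_u(v,v) √(det g)` (body-integral form). -/
noncomputable def gammaOne (n : ℕ) (L : (Fin n → ℝ) → ℝ) (v : Fin n → ℝ) : ℝ :=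
  n * ∫ u in {u : Fin n → ℝ | L u ≤ 1},
    (∑ i, ∑ j, v i * v j * gmet n L u i j) * volDens n L u

/-- `γ₃(v,v) = ∫_{∂K} (VL)² μ = n ∫_K (VL)² √(det g)` (body-integral form). -/
noncomputable def gammaThree (n : ℕ) (L : (Fin n → ℝ) → ℝ) (v : Fin n → ℝ) : ℝ :=
  n * ∫ u in {u : Fin n → ℝ | L u ≤ 1},
    (∑ i, v i * fderiv ℝ L u (Pi.single i 1)) ^ 2 * volDens n L u

/-- `β(v) = ∫_{∂K} VL μ = n ∫_K VL √(det g)` (body-integral form). -/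
noncomputable def betaFun (n : ℕ) (L : (Fin n → ℝ) → ℝ) (v : Fin n → ℝ) : ℝ :=
  n * ∫ u in {u : Fin n → ℝ | L u ≤ 1},
    (∑ i, v i * fderiv ℝ L u (Pi.single i 1)) * volDens n L u

/-- `Area(∂K) = ∫_{∂K} 1 μ = n ∫_K √(det g)` (body-integral form). -/
noncomputable def areaBoundary (n : ℕ) (L : (Fin n → ℝ) → ℝ) : ℝ :=
  n * ∫ u in {u : Fin n → ℝ | L u ≤ 1}, volDens n L u


/-- Continuous away from the origin and positively homogeneous of degree zero. -/
def RHom (n : ℕ) (h : (Fin n → ℝ) → ℝ) : Prop :=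
  ContinuousOn h {0}ᶜ ∧ ∀ u : Fin n → ℝ, u ≠ 0 → ∀ t : ℝ, 0 < t → h (t • u) = h u

lemma RHom.bound {n : ℕ} {h : (Fin n → ℝ) → ℝ} (hh : RHom n h) :
    ∃ C, ∀ u, u ≠ 0 → ‖h u‖ ≤ C := by
  have hc : IsCompact (Metric.sphere (0 : Fin n → ℝ) 1) := isCompact_sphere _ _
  obtain ⟨C, hC⟩ := hc.exists_bound_of_continuousOn (f := h) (hh.1.mono (by
    intro x hx h0
    simp at hx h0
    simp [h0] at hx))
  refine ⟨C, fun u hu => ?_⟩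
  have hn : 0 < ‖u‖ := norm_pos_iff.2 hu
  rw [← hh.2 u hu (‖u‖⁻¹) (inv_pos.2 hn)]
  apply hC
  simp [norm_smul, hn.ne']

lemma fm_contOn {n : ℕ} {L : (Fin n → ℝ) → ℝ} (hL : IsFinslerMinkowski n L) :
    ContDiffOn ℝ 4 L {0}ᶜ := fun u hu => (hL.2.2.1 u hu).contDiffWithinAt

lemma fm_ae {n : ℕ} (hn : n ≠ 0) (L : (Fin n → ℝ) → ℝ) :
    ({u : Fin n → ℝ | L u ≤ 1} : Set _) =ᵐ[volume] ({0}ᶜ ∩ {u : Fin n → ℝ | L u ≤ 1} : Set _) := by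
  have : NeZero n := ⟨hn⟩
  have : ∀ᵐ u : Fin n → ℝ, u ∈ ({0}ᶜ : Set (Fin n → ℝ)) := by
    rw [ae_iff]; simp
  filter_upwards [this] with u hu
  apply propext
  exact ⟨fun h => ⟨hu, h⟩, fun h => h.2⟩

lemma fm_meas {n : ℕ} {L : (Fin n → ℝ) → ℝ} (hL : IsFinslerMinkowski n L) :
    MeasurableSet ({0}ᶜ ∩ {u : Fin n → ℝ | L u ≤ 1} : Set _) := by
  have h := (fm_contOn hL).continuousOn.isOpen_inter_preimage isOpen_compl_singleton
    (isOpen_Ioi (a := (1:ℝ)))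
  have : ({0}ᶜ ∩ {u : Fin n → ℝ | L u ≤ 1} : Set _) = {0}ᶜ \ ({0}ᶜ ∩ L ⁻¹' Set.Ioi 1) := by
    ext u; simp
  rw [this]
  exact isOpen_compl_singleton.measurableSet.diff h.measurableSet

lemma fm_fin {n : ℕ} {L : (Fin n → ℝ) → ℝ} (hL : IsFinslerMinkowski n L) :
    volume ({0}ᶜ ∩ {u : Fin n → ℝ | L u ≤ 1} : Set _) < ⊤ := by
  have hR : RHom n (fun u => ‖u‖ / L u) := by
    refine ⟨continuous_norm.continuousOn.div (fm_contOn hL).continuousOn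
      (fun u hu => (hL.2.1 u hu).ne'), fun u hu t ht => ?_⟩
    have := hL.2.1 u hu
    simp only [hL.1 u hu t ht, norm_smul, Real.norm_of_nonneg ht.le]
    field_simp
  obtain ⟨C, hC⟩ := hR.bound
  apply Bornology.IsBounded.measure_lt_top
  rw [isBounded_iff_forall_norm_le]
  refine ⟨C, fun u hu => ?_⟩
  have h1 := (le_abs_self _).trans (hC u hu.1)
  have h2 := hL.2.1 u hu.1
  have h3 : L u ≤ 1 := hu.2
  refine le_trans ?_ h1
  rw [le_div_iff₀ h2]
  nlinarith [norm_nonneg u]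

lemma RHom.integrableOn {n : ℕ} (hn : n ≠ 0) {L : (Fin n → ℝ) → ℝ}
    (hL : IsFinslerMinkowski n L) {h : (Fin n → ℝ) → ℝ} (hh : RHom n h) :
    IntegrableOn h {u : Fin n → ℝ | L u ≤ 1} := by
  rw [integrableOn_congr_set_ae (fm_ae hn L)]
  obtain ⟨C, hC⟩ := hh.bound
  refine IntegrableOn.of_bound (fm_fin hL) ?_ C ?_
  · exact ((hh.1.mono Set.inter_subset_left).aestronglyMeasurable (fm_meas hL))
  · exact (ae_restrict_iff' (fm_meas hL)).2 (Filter.Eventually.of_forall fun u hu => hC u hu.1)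

lemma RHom.integral_pos {n : ℕ} (hn : n ≠ 0) {L : (Fin n → ℝ) → ℝ}
    (hL : IsFinslerMinkowski n L) {h : (Fin n → ℝ) → ℝ} (hh : RHom n h)
    (h0 : ∀ u, u ≠ 0 → 0 ≤ h u) (p : Fin n → ℝ) (hp : p ≠ 0) (hpp : 0 < h p) :
    0 < ∫ u in {u : Fin n → ℝ | L u ≤ 1}, h u := by
  have hi := hh.integrableOn hn hL
  rw [integrableOn_congr_set_ae (fm_ae hn L)] at hi
  rw [setIntegral_congr_set (fm_ae hn L)]
  rw [setIntegral_pos_iff_support_of_nonneg_ae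
    ((ae_restrict_iff' (fm_meas hL)).2 (Filter.Eventually.of_forall fun u hu => h0 u hu.1)) hi]
  have o1 := (fm_contOn hL).continuousOn.isOpen_inter_preimage isOpen_compl_singleton
    (isOpen_Iio (a := (1:ℝ)))
  have o2 := hh.1.isOpen_inter_preimage isOpen_compl_singleton (isOpen_Ioi (a := (0:ℝ)))
  refine lt_of_lt_of_le ((o1.inter o2).measure_pos volume ?_) (measure_mono ?_)
  · have hLp := hL.2.1 p hp
    have ht : 0 < (2 * L p)⁻¹ := by positivity
    have hne : (2 * L p)⁻¹ • p ≠ 0 := smul_ne_zero ht.ne' hp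
    refine ⟨(2 * L p)⁻¹ • p, ⟨hne, ?_⟩, hne, ?_⟩
    · simp only [Set.mem_preimage, hL.1 p hp _ ht, Set.mem_Iio]
      field_simp
      norm_num
    · show 0 < h _
      rw [hh.2 p hp _ ht]
      exact hpp
  · rintro u ⟨⟨a, b⟩, -, c⟩
    have b' : L u < 1 := b
    exact ⟨ne_of_gt c, a, b'.le⟩

lemma fd_hom {n : ℕ} {F : (Fin n → ℝ) → ℝ} {t c : ℝ}
    (h : ∀ u, u ≠ 0 → F (t • u) = c * F u) (u : Fin n → ℝ) (hu : u ≠ 0)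
    (hd : DifferentiableAt ℝ F u) :
    t • fderiv ℝ F (t • u) = c • fderiv ℝ F u := by
  rw [← fderiv_comp_smul, ← fderiv_const_smul hd c]
  apply Filter.EventuallyEq.fderiv_eq
  filter_upwards [isOpen_compl_singleton.mem_nhds hu] with w hw
  simpa using h w hw

lemma fd_euler {n : ℕ} {F : (Fin n → ℝ) → ℝ} (u : Fin n → ℝ)
    (h : ∀ t : ℝ, 0 < t → F (t • u) = t * F u)
    (hd : DifferentiableAt ℝ F u) : fderiv ℝ F u u = F u := by
  have h1 : HasDerivAt (fun t : ℝ => F (t • u)) (fderiv ℝ F u u) 1 := by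
    have a : HasDerivAt (fun t : ℝ => t • u) u 1 := by
      simpa using (hasDerivAt_id (1:ℝ)).smul_const u
    have b : HasFDerivAt F (fderiv ℝ F u) ((1:ℝ) • u) := by simpa using hd.hasFDerivAt
    exact b.comp_hasDerivAt (1:ℝ) a
  have h2 : HasDerivAt (fun t : ℝ => F (t • u)) (F u) 1 := by
    have a : HasDerivAt (fun t : ℝ => t * F u) (F u) 1 := by
      simpa using (hasDerivAt_id (1:ℝ)).mul_const (F u)
    refine a.congr_of_eventuallyEq ?_
    filter_upwards [lt_mem_nhds (show (0:ℝ) < 1 by norm_num)] with t ht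
    exact h t ht
  exact h1.unique h2

lemma clm_sum {n : ℕ} (A : (Fin n → ℝ) →L[ℝ] ℝ) (v : Fin n → ℝ) :
    ∑ i, v i * A (Pi.single i 1) = A v := by
  conv_rhs => rw [pi_eq_sum_univ' v]
  simp [map_sum]

section
variable {n : ℕ} {L : (Fin n → ℝ) → ℝ} (hL : IsFinslerMinkowski n L)

lemma fm_E (hL : IsFinslerMinkowski n L) : ContDiffOn ℝ 4 (fun w => L w ^ 2 / 2) {0}ᶜ :=
  ((fm_contOn hL).pow 2).div_const 2

lemma fm_dE (hL : IsFinslerMinkowski n L) :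
    ContDiffOn ℝ 3 (fderiv ℝ (fun w => L w ^ 2 / 2)) {0}ᶜ :=
  (fm_E hL).fderiv_of_isOpen isOpen_compl_singleton (by norm_num)

lemma fm_ddE (hL : IsFinslerMinkowski n L) :
    ContDiffOn ℝ 2 (fderiv ℝ (fderiv ℝ (fun w => L w ^ 2 / 2))) {0}ᶜ :=
  (fm_dE hL).fderiv_of_isOpen isOpen_compl_singleton (by norm_num)

lemma fm_diffL (hL : IsFinslerMinkowski n L) {u : Fin n → ℝ} (hu : u ≠ 0) :
    DifferentiableAt ℝ L u := (hL.2.2.1 u hu).differentiableAt (by norm_num)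

lemma fm_diffE (hL : IsFinslerMinkowski n L) {u : Fin n → ℝ} (hu : u ≠ 0) :
    DifferentiableAt ℝ (fun w => L w ^ 2 / 2) u :=
  ((fm_E hL).contDiffAt (isOpen_compl_singleton.mem_nhds hu)).differentiableAt (by norm_num)

lemma fm_diffdE (hL : IsFinslerMinkowski n L) {u : Fin n → ℝ} (hu : u ≠ 0) :
    DifferentiableAt ℝ (fderiv ℝ (fun w => L w ^ 2 / 2)) u :=
  ((fm_dE hL).contDiffAt (isOpen_compl_singleton.mem_nhds hu)).differentiableAt (by norm_num)

lemma fm_gmet (hL : IsFinslerMinkowski n L) {u : Fin n → ℝ} (hu : u ≠ 0) (i j : Fin n) :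
    gmet n L u i j =
      fderiv ℝ (fderiv ℝ (fun w => L w ^ 2 / 2)) u (Pi.single j 1) (Pi.single i 1) := by
  unfold gmet
  rw [fderiv_clm_apply (fm_diffdE hL hu) (differentiableAt_const _)]
  simp

lemma fm_symm (hL : IsFinslerMinkowski n L) {u : Fin n → ℝ} (hu : u ≠ 0) (v w : Fin n → ℝ) :
    fderiv ℝ (fderiv ℝ (fun w => L w ^ 2 / 2)) u v w =
    fderiv ℝ (fderiv ℝ (fun w => L w ^ 2 / 2)) u w v := by
  have := ((fm_E hL).contDiffAt (isOpen_compl_singleton.mem_nhds hu)).isSymmSndFDerivAt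
    (by simp; norm_num)
  exact this v w

lemma fm_quad (hL : IsFinslerMinkowski n L) {u : Fin n → ℝ} (hu : u ≠ 0) (v : Fin n → ℝ) :
    ∑ i, ∑ j, v i * v j * gmet n L u i j =
      fderiv ℝ (fderiv ℝ (fun w => L w ^ 2 / 2)) u v v := by
  rw [← clm_sum (fderiv ℝ (fderiv ℝ (fun w => L w ^ 2 / 2)) u v) v]
  refine Finset.sum_congr rfl fun i _ => ?_
  rw [fm_symm hL hu v, ← clm_sum _ v, Finset.mul_sum]
  refine Finset.sum_congr rfl fun j _ => ?_
  rw [fm_gmet hL hu, fm_symm hL hu]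
  ring

lemma fm_dE_eq (hL : IsFinslerMinkowski n L) {u : Fin n → ℝ} (hu : u ≠ 0) :
    fderiv ℝ (fun w => L w ^ 2 / 2) u = L u • fderiv ℝ L u := by
  have h := ((fm_diffL hL hu).hasFDerivAt.pow 2).mul_const (1/2 : ℝ)
  have e : (fun w => L w ^ 2 / 2) = (fun w => L w ^ 2 * (1/2 : ℝ)) := by ext; ring
  rw [e]
  refine h.fderiv.trans ?_
  ext w
  simp
  ring

lemma fm_dL_hom (hL : IsFinslerMinkowski n L) {u : Fin n → ℝ} (hu : u ≠ 0) {t : ℝ} (ht : 0 < t) :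
    fderiv ℝ L (t • u) = fderiv ℝ L u := by
  have := fd_hom (F := L) (t := t) (c := t) (fun u hu => hL.1 u hu t ht) u hu (fm_diffL hL hu)
  exact smul_right_injective _ ht.ne' this

lemma fm_dE_hom (hL : IsFinslerMinkowski n L) {u : Fin n → ℝ} (hu : u ≠ 0) {t : ℝ} (ht : 0 < t) :
    fderiv ℝ (fun w => L w ^ 2 / 2) (t • u) = t • fderiv ℝ (fun w => L w ^ 2 / 2) u := by
  rw [fm_dE_eq hL hu, fm_dE_eq hL (smul_ne_zero ht.ne' hu), fm_dL_hom hL hu ht, hL.1 u hu t ht,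
    mul_smul]

lemma fm_diffdEv (hL : IsFinslerMinkowski n L) {u : Fin n → ℝ} (hu : u ≠ 0) (v : Fin n → ℝ) :
    DifferentiableAt ℝ (fun x => fderiv ℝ (fun w => L w ^ 2 / 2) x v) u :=
  (fm_diffdE hL hu).clm_apply (differentiableAt_const _)

lemma fm_gmet_hom (hL : IsFinslerMinkowski n L) {u : Fin n → ℝ} (hu : u ≠ 0) {t : ℝ} (ht : 0 < t)
    (i j : Fin n) : gmet n L (t • u) i j = gmet n L u i j := by
  unfold gmet
  have := fd_hom (F := fun x => fderiv ℝ (fun w => L w ^ 2 / 2) x (Pi.single i 1))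
    (t := t) (c := t) (fun u hu => by simp [fm_dE_hom hL hu ht]) u hu (fm_diffdEv hL hu _)
  have := smul_right_injective _ ht.ne' this
  rw [this]

lemma fm_ddE_u (hL : IsFinslerMinkowski n L) {u : Fin n → ℝ} (hu : u ≠ 0) (v : Fin n → ℝ) :
    fderiv ℝ (fderiv ℝ (fun w => L w ^ 2 / 2)) u u v = L u * fderiv ℝ L u v := by
  have h := fd_euler (F := fun x => fderiv ℝ (fun w => L w ^ 2 / 2) x v) u
    (fun t ht => by simp [fm_dE_hom hL hu ht]) (fm_diffdEv hL hu _)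
  rw [fderiv_clm_apply (fm_diffdE hL hu) (differentiableAt_const _)] at h
  simpa [fm_dE_eq hL hu] using h

lemma fm_cs (hL : IsFinslerMinkowski n L) {u : Fin n → ℝ} (hu : u ≠ 0) (v : Fin n → ℝ) :
    (fderiv ℝ L u v) ^ 2 ≤ fderiv ℝ (fderiv ℝ (fun w => L w ^ 2 / 2)) u v v := by
  have hp := hL.2.1 u hu
  have eu : fderiv ℝ L u u = L u := fd_euler u (fun t ht => hL.1 u hu t ht) (fm_diffL hL hu)
  have hq : ∀ w, 0 ≤ fderiv ℝ (fderiv ℝ (fun w => L w ^ 2 / 2)) u w w := by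
    intro w
    by_cases hw : w = 0
    · simp [hw]
    · rw [← fm_quad hL hu]; exact (hL.2.2.2 u hu w hw).le
  have h := hq (L u • v - fderiv ℝ L u v • u)
  have a := fm_ddE_u hL hu v
  have b := fm_ddE_u hL hu u
  have c := fm_symm hL hu v u
  rw [eu] at b
  rw [a] at c
  simp only [map_sub, map_smul, ContinuousLinearMap.sub_apply, ContinuousLinearMap.smul_apply,
    smul_eq_mul, a, b, c] at h
  have : 0 ≤ L u ^ 2 * (fderiv ℝ (fderiv ℝ (fun w => L w ^ 2 / 2)) u v v - fderiv ℝ L u v ^ 2) := by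
    linarith
  have := nonneg_of_mul_nonneg_right this (by positivity)
  linarith

lemma fm_vol_pos (hL : IsFinslerMinkowski n L) {u : Fin n → ℝ} (hu : u ≠ 0) :
    0 < volDens n L u := by
  apply Real.sqrt_pos.2
  apply Matrix.PosDef.det_pos
  refine Matrix.PosDef.of_dotProduct_mulVec_pos ?_ ?_
  · ext i j
    simp [fm_gmet hL hu]
    exact fm_symm hL hu _ _
  · intro x hx
    have := hL.2.2.2 u hu x hx
    refine lt_of_lt_of_eq this ?_
    change _ = ∑ i, x i * ∑ j, gmet n L u i j * x j
    simp only [Finset.mul_sum]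
    refine Finset.sum_congr rfl fun i _ => Finset.sum_congr rfl fun j _ => ?_
    ring

lemma fm_gmet_cont (hL : IsFinslerMinkowski n L) (i j : Fin n) :
    ContinuousOn (fun u => gmet n L u i j) {0}ᶜ := by
  refine ContinuousOn.congr (f := fun u => fderiv ℝ (fderiv ℝ (fun w => L w ^ 2 / 2)) u
    (Pi.single j 1) (Pi.single i 1)) ?_ (fun u hu => fm_gmet hL hu i j)
  exact ((fm_ddE hL).continuousOn.clm_apply continuousOn_const).clm_apply continuousOn_const

lemma fm_vol_RHom (hL : IsFinslerMinkowski n L) : RHom n (volDens n L) := by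
  constructor
  · apply Real.continuous_sqrt.comp_continuousOn
    have h : ContinuousOn (fun u => (Matrix.of fun i j => gmet n L u i j)) {0}ᶜ :=
      continuousOn_pi.2 fun i => continuousOn_pi.2 fun j => fm_gmet_cont hL i j
    exact (continuous_id.matrix_det).comp_continuousOn h
  · intro u hu t ht
    simp only [volDens, fm_gmet_hom hL hu ht]

lemma RHom.mul {f g : (Fin n → ℝ) → ℝ} (hf : RHom n f) (hg : RHom n g) :
    RHom n (fun u => f u * g u) :=
  ⟨hf.1.mul hg.1, fun u hu t ht => by simp only [hf.2 u hu t ht, hg.2 u hu t ht]⟩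

lemma fm_dL_RHom (hL : IsFinslerMinkowski n L) (v : Fin n → ℝ) :
    RHom n (fun u => fderiv ℝ L u v) := by
  constructor
  · exact ((fm_contOn hL).continuousOn_fderiv_of_isOpen isOpen_compl_singleton
      (by norm_num)).clm_apply continuousOn_const
  · intro u hu t ht
    simp only [fm_dL_hom hL hu ht]

lemma fm_Q_RHom (hL : IsFinslerMinkowski n L) (v : Fin n → ℝ) :
    RHom n (fun u => ∑ i, ∑ j, v i * v j * gmet n L u i j) := by
  constructor
  · exact continuousOn_finset_sum _ fun i _ => continuousOn_finset_sum _ fun j _ =>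
      continuousOn_const.mul (fm_gmet_cont hL i j)
  · intro u hu t ht
    simp only [fm_gmet_hom hL hu ht]

end

lemma sqrt_aux {a b c x : ℝ} (ha : 0 < a) (h : 0 < c - 2 * (b / a) * b + (b / a) ^ 2 * a)
    (hx : c ≤ x) : 0 < Real.sqrt (x / a) + b / a := by
  have h1 : (b / a) ^ 2 < x / a := by
    rw [lt_div_iff₀ ha]
    have : b / a * b = (b / a) ^ 2 * a := by field_simp
    nlinarith
  have h2 := Real.lt_sqrt_of_sq_lt (x := |b / a|) (y := x / a) (by simpa using h1)
  linarith [neg_abs_le (b / a)]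

/-- the associated Randers–Minkowski functionals
`L₁(v) = √(Γ₁(v,v)) + β(v)/Area(∂K)` and `L₃(v) = √(Γ₃(v,v)) + β(v)/Area(∂K)`
(with `Γᵢ = γᵢ/Area(∂K)`) are positive on `ℝⁿ \ {0}`. -/
theorem associated_randers_functionals_positive
    (n : ℕ) (L : (Fin n → ℝ) → ℝ) (hL : IsFinslerMinkowski n L)
    (v : Fin n → ℝ) (hv : v ≠ 0) :
    0 < Real.sqrt (gammaOne n L v / areaBoundary n L) + betaFun n L v / areaBoundary n L ∧
    0 < Real.sqrt (gammaThree n L v / areaBoundary n L) + betaFun n L v / areaBoundary n L := by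
  have hn : n ≠ 0 := by
    rintro rfl
    exact hv (Subsingleton.elim _ _)
  have hnR : (n : ℝ) ≠ 0 := by exact_mod_cast hn
  unfold gammaOne gammaThree betaFun areaBoundary
  simp only [clm_sum, mul_div_mul_left _ _ hnR]
  have hr := fm_vol_RHom hL
  have hf := fm_dL_RHom hL v
  have hfr := hf.mul hr
  have hffr : RHom n (fun u => fderiv ℝ L u v ^ 2 * volDens n L u) := by
    simpa only [pow_two] using (hf.mul hf).mul hr
  have ha : 0 < ∫ u in {u : Fin n → ℝ | L u ≤ 1}, volDens n L u :=
    hr.integral_pos hn hL (fun u hu => (fm_vol_pos hL hu).le) v hv (fm_vol_pos hL hv)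
  have i0 := hr.integrableOn hn hL
  have i1 := hfr.integrableOn hn hL
  have i2 := hffr.integrableOn hn hL
  have i3 := ((fm_Q_RHom hL v).mul hr).integrableOn hn hL
  have h31 : ∫ u in {u : Fin n → ℝ | L u ≤ 1}, fderiv ℝ L u v ^ 2 * volDens n L u ≤
      ∫ u in {u : Fin n → ℝ | L u ≤ 1},
        (∑ i, ∑ j, v i * v j * gmet n L u i j) * volDens n L u := by
    rw [setIntegral_congr_set (fm_ae hn L), setIntegral_congr_set (fm_ae hn L)]
    rw [integrableOn_congr_set_ae (fm_ae hn L)] at i2 i3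
    refine setIntegral_mono_on i2 i3 (fm_meas hL) fun u hu => ?_
    rw [fm_quad hL hu.1]
    exact mul_le_mul_of_nonneg_right (fm_cs hL hu.1 v) (fm_vol_pos hL hu.1).le
  have key : ∀ c : ℝ, 0 < (∫ u in {u : Fin n → ℝ | L u ≤ 1}, fderiv ℝ L u v ^ 2 * volDens n L u)
      - 2 * c * (∫ u in {u : Fin n → ℝ | L u ≤ 1}, fderiv ℝ L u v * volDens n L u)
      + c ^ 2 * ∫ u in {u : Fin n → ℝ | L u ≤ 1}, volDens n L u := by
    intro c
    have i4 : Integrable (fun u => fderiv ℝ L u v ^ 2 * volDens n L u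
        - 2 * c * (fderiv ℝ L u v * volDens n L u))
        (volume.restrict {u : Fin n → ℝ | L u ≤ 1}) :=
      Integrable.sub i2 (i1.const_mul (2 * c))
    rw [← integral_const_mul, ← integral_const_mul, ← integral_sub i2 (i1.const_mul _),
      ← integral_add (f := fun u => fderiv ℝ L u v ^ 2 * volDens n L u
        - 2 * c * (fderiv ℝ L u v * volDens n L u))
        i4 (i0.const_mul _)]
    have e : (fun u => fderiv ℝ L u v ^ 2 * volDens n L u
        - 2 * c * (fderiv ℝ L u v * volDens n L u) + c ^ 2 * volDens n L u) =
        fun u => (fderiv ℝ L u v - c) ^ 2 * volDens n L u := by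
      ext u; ring
    have hR : RHom n (fun u => (fderiv ℝ L u v - c) ^ 2 * volDens n L u) :=
      ⟨((hf.1.sub continuousOn_const).pow 2).mul hr.1, fun u hu t ht => by
        simp only [hr.2 u hu t ht, fm_dL_hom hL hu ht]⟩
    have hnn : ∀ u, u ≠ 0 → 0 ≤ (fderiv ℝ L u v - c) ^ 2 * volDens n L u :=
      fun u hu => mul_nonneg (sq_nonneg _) (fm_vol_pos hL hu).le
    have hp : ∃ p : Fin n → ℝ, p ≠ 0 ∧ fderiv ℝ L p v - c ≠ 0 := by
      by_contra! hcon
      have hv' : -v ≠ 0 := neg_ne_zero.2 hv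
      have e1 : fderiv ℝ L v v = L v := fd_euler v (fun t ht => hL.1 v hv t ht) (fm_diffL hL hv)
      have e2 : fderiv ℝ L (-v) (-v) = L (-v) :=
        fd_euler (-v) (fun t ht => hL.1 (-v) hv' t ht) (fm_diffL hL hv')
      rw [map_neg] at e2
      linarith [hcon v hv, hcon (-v) hv', hL.2.1 v hv, hL.2.1 (-v) hv']
    obtain ⟨p, hp, hpc⟩ := hp
    rw [e]
    exact hR.integral_pos hn hL hnn p hp (mul_pos (by positivity) (fm_vol_pos hL hp))
  exact ⟨sqrt_aux ha (key _) h31, sqrt_aux ha (key _) le_rfl⟩
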